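/- There exists an AAPA whose language is recognized by no NAPA: there are a finite alphabet Σ and an AAPA A over Σ with two directions such that L(B) ≠ L(A) for every NAPA B over Σ with two directions. -/

import Mathlib

/-! ### Positive Boolean formulas -/

/-- Positive Boolean formulas over a set of atoms `Q`, built from atoms,
conjunction, disjunction and the constants true and false. -/
inductive PosBool (Q : Type u) : Type u
  | tt : PosBool Q
  | ff : PosBool Q
  | var : Q → PosBool Q
  | and : PosBool Q → PosBool Q → PosBool Q
  | or : PosBool Q → PosBool Q → PosBool Q

namespace PosBool

/-- `Sat C f` holds iff the valuation making exactly the elements of `C` true satisfies `f`. -/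
def Sat {Q : Type u} (C : Set Q) : PosBool Q → Prop
  | tt => True
  | ff => False
  | var q => q ∈ C
  | and f g => Sat C f ∧ Sat C g
  | or f g => Sat C f ∨ Sat C g

/-- A positive Boolean formula that is a disjunction of atoms. -/
inductive IsDisj {Q : Type u} : PosBool Q → Prop
  | ff : IsDisj ff
  | var (q : Q) : IsDisj (var q)
  | or {f g : PosBool Q} : IsDisj f → IsDisj g → IsDisj (f.or g)

/-- Syntactic size of a positive Boolean formula. -/
def size {Q : Type u} : PosBool Q → ℕ
  | tt => 1
  | ff => 1
  | var _ => 1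
  | and f g => size f + size g + 1
  | or f g => size f + size g + 1

end PosBool

/-! ### Alternating Asynchronous Parity Automata -/

/-- An Alternating Asynchronous Parity Automaton (AAPA) over the alphabet `σ`
with state set `Q` and `n` directions. -/
structure AAPA (σ : Type u) (Q : Type v) (n : ℕ) where
  init : PosBool Q
  trans : Q → σ → Fin n → PosBool Q
  prio : Q → ℕ

namespace AAPA

variable {σ : Type u} {Q : Type v} {n : ℕ}

/-- A run of an AAPA `A` on the tuple of `ω`-words `w`: a tree of nodes
(coded as lists of natural numbers, the root being `[]`), whose non-root nodes
are labeled with states and which carry offset counters, subject to the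
local consistency conditions of AAPA runs. -/
structure Run (A : AAPA σ Q n) (w : Fin n → ℕ → σ) where
  tree : Set (List ℕ)
  label : List ℕ → Q
  cnt : List ℕ → Fin n → ℕ
  root_mem : [] ∈ tree
  prefix_closed : ∀ (t : List ℕ) (m : ℕ), t ++ [m] ∈ tree → t ∈ tree
  has_child : ∀ t ∈ tree, ∃ m : ℕ, t ++ [m] ∈ tree
  cnt_init : ∀ t ∈ tree, t.length ≤ 1 → cnt t = 0
  init_sat : PosBool.Sat {q | ∃ m : ℕ, [m] ∈ tree ∧ label [m] = q} A.init
  step : ∀ t ∈ tree, t ≠ [] → ∃ d : Fin n,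
    (∀ m : ℕ, t ++ [m] ∈ tree →
      cnt (t ++ [m]) = Function.update (cnt t) d (cnt t d + 1)) ∧
    PosBool.Sat {q | ∃ m : ℕ, t ++ [m] ∈ tree ∧ label (t ++ [m]) = q}
      (A.trans (label t) (w d (cnt t d)) d)

variable {A : AAPA σ Q n} {w : Fin n → ℕ → σ}

/-- An infinite path through a run, starting at the root. -/
def Run.IsPath (r : A.Run w) (p : ℕ → List ℕ) : Prop :=
  p 0 = [] ∧ ∀ i : ℕ, (∃ m : ℕ, p (i + 1) = p i ++ [m]) ∧ p (i + 1) ∈ r.tree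

/-- A run is accepting iff on every infinite path the least priority occurring
infinitely often is even. -/
def Run.Accepting (r : A.Run w) : Prop :=
  ∀ p : ℕ → List ℕ, r.IsPath p →
    Even (sInf {c : ℕ | ∀ N : ℕ, ∃ i : ℕ, N ≤ i ∧ A.prio (r.label (p i)) = c})

/-- The language of an AAPA: the set of tuples of `ω`-words on which it has an
accepting run. -/
def lang (A : AAPA σ Q n) : Set (Fin n → ℕ → σ) :=
  {w | ∃ r : A.Run w, r.Accepting}

/-- A Nondeterministic Asynchronous Parity Automaton (NAPA) is an AAPA whose
initial condition and transitions are disjunctions of states. -/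
def IsNondet (A : AAPA σ Q n) : Prop :=
  A.init.IsDisj ∧ ∀ (q : Q) (a : σ) (d : Fin n), (A.trans q a d).IsDisj

end AAPA

namespace PosBool

theorem Sat.mono {Q : Type*} {C D : Set Q} (h : C ⊆ D) {f : PosBool Q} (hf : f.Sat C) :
    f.Sat D := by
  induction f with
  | tt => trivial
  | ff => exact hf
  | var q => exact h hf
  | and f g ihf ihg => exact ⟨ihf hf.1, ihg hf.2⟩
  | or f g ihf ihg => exact hf.imp ihf ihg

theorem IsDisj.exists_sat_singleton {Q : Type*} {C : Set Q} {f : PosBool Q} (hd : f.IsDisj)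
    (hf : f.Sat C) : ∃ q ∈ C, f.Sat {q} := by
  induction hd with
  | ff => exact hf.elim
  | var q => exact ⟨q, hf, rfl⟩
  | or _ _ ihf ihg =>
    rcases hf with hf | hf
    · obtain ⟨q, hq, h⟩ := ihf hf
      exact ⟨q, hq, Or.inl h⟩
    · obtain ⟨q, hq, h⟩ := ihg hf
      exact ⟨q, hq, Or.inr h⟩

end PosBool

/-- The set of values taken infinitely often is not affected by a shift of the sequence. -/
theorem setOf_frequently_eq_of_shift {α : Type*} {f g : ℕ → α} {a b : ℕ}
    (h : ∀ i, f (i + a) = g (i + b)) :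
    {c | ∀ N : ℕ, ∃ i : ℕ, N ≤ i ∧ f i = c} = {c | ∀ N : ℕ, ∃ i : ℕ, N ≤ i ∧ g i = c} := by
  ext c
  constructor
  · intro H N
    obtain ⟨i, hi, rfl⟩ := H (N + a)
    refine ⟨i - a + b, by omega, ?_⟩
    rw [← h, Nat.sub_add_cancel (by omega)]
  · intro H N
    obtain ⟨i, hi, rfl⟩ := H (N + b)
    refine ⟨i - b + a, by omega, ?_⟩
    rw [h, Nat.sub_add_cancel (by omega)]

namespace AAPA

section Branches

variable {σ Q : Type*} {n : ℕ}

/-- An accepting non-branching computation of `A` on `w`, with states `q` and counters `c`. -/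
structure IsBranch (A : AAPA σ Q n) (w : Fin n → ℕ → σ) (q : ℕ → Q) (c : ℕ → Fin n → ℕ) :
    Prop where
  zero : c 0 = 0
  step : ∀ k, ∃ d, c (k + 1) = Function.update (c k) d (c k d + 1) ∧
    (A.trans (q k) (w d (c k d)) d).Sat {q (k + 1)}
  even : Even (sInf {p : ℕ | ∀ N : ℕ, ∃ i : ℕ, N ≤ i ∧ A.prio (q i) = p})

/-- Branches which jointly satisfy the initial condition form an accepting run that branches
at the root only. -/
theorem mem_lang_of_isBranch {A : AAPA σ Q n} {w : Fin n → ℕ → σ} (q : ℕ → ℕ → Q)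
    (c : ℕ → ℕ → Fin n → ℕ) (hinit : A.init.Sat {s | ∃ b, q b 0 = s})
    (h : ∀ b, A.IsBranch w (q b) (c b)) : w ∈ A.lang := by
  refine ⟨{
    tree := {t | ∀ x ∈ t.tail, x = 0}
    label := fun t => q (t.headD 0) (t.length - 1)
    cnt := fun t => c (t.headD 0) (t.length - 1)
    root_mem := by simp
    prefix_closed := ?_
    has_child := ?_
    cnt_init := ?_
    init_sat := ?_
    step := ?_ }, ?_⟩
  · rintro (_ | ⟨b, t⟩) m ht
    · simp
    · intro x hx
      exact ht x (by simpa using Or.inl hx)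
  · rintro (_ | ⟨b, t⟩) ht
    · exact ⟨0, by simp⟩
    · refine ⟨0, fun x hx => ?_⟩
      simp only [List.cons_append, List.tail_cons, List.mem_append, List.mem_singleton] at hx
      exact hx.elim (ht x) id
  · intro t _ hl
    have : t.length - 1 = 0 := by omega
    simp only [this, (h _).zero]
  · simpa using hinit
  · rintro (_ | ⟨b, t⟩) ht hne
    · exact absurd rfl hne
    · obtain ⟨d, hd, hs⟩ := (h b).step t.length
      refine ⟨d, fun m _ => by simpa using hd, ?_⟩
      refine PosBool.Sat.mono ?_ (by simpa using hs)
      rintro _ rfl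
      refine ⟨0, fun x hx => ?_, by simp⟩
      simp only [List.cons_append, List.tail_cons, List.mem_append, List.mem_singleton] at hx
      exact hx.elim (ht x) id
  · rintro p ⟨hp0, hp⟩
    obtain ⟨b, hb⟩ := (hp 0).1
    have key : ∀ i, ∃ t, p (i + 1) = b :: t ∧ t.length = i := by
      intro i
      induction i with
      | zero => exact ⟨[], by simpa [hp0] using hb, rfl⟩
      | succ i ih =>
        obtain ⟨t, ht, hl⟩ := ih
        obtain ⟨m, hm⟩ := (hp (i + 1)).1
        exact ⟨t ++ [m], by simp [hm, ht], by simp [hl]⟩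
    rw [setOf_frequently_eq_of_shift (a := 1) (b := 0) (g := fun i => A.prio (q b i))]
    · exact (h b).even
    · intro i
      obtain ⟨t, ht, hl⟩ := key i
      simp [ht, hl]

/-- A nondeterministic automaton accepts by a single branch. -/
theorem IsNondet.exists_isBranch {A : AAPA σ Q n} (hA : A.IsNondet) {w : Fin n → ℕ → σ}
    (hw : w ∈ A.lang) : ∃ q c, A.init.Sat {q 0} ∧ A.IsBranch w q c := by
  obtain ⟨r, hr⟩ := hw
  obtain ⟨_, ⟨m₀, hm₀, rfl⟩, hinit⟩ := hA.1.exists_sat_singleton r.init_sat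
  have next : ∀ t : {t // t ∈ r.tree ∧ t ≠ []}, ∃ t' : {t // t ∈ r.tree ∧ t ≠ []},
      (∃ m, t'.1 = t.1 ++ [m]) ∧ ∃ d,
        r.cnt t'.1 = Function.update (r.cnt t.1) d (r.cnt t.1 d + 1) ∧
        (A.trans (r.label t.1) (w d (r.cnt t.1 d)) d).Sat {r.label t'.1} := by
    rintro ⟨t, ht, hne⟩
    obtain ⟨d, hc, hs⟩ := r.step t ht hne
    obtain ⟨_, ⟨m, hm, rfl⟩, hq⟩ := (hA.2 _ _ _).exists_sat_singleton hs
    exact ⟨⟨t ++ [m], hm, by simp⟩, ⟨m, rfl⟩, d, hc m hm, hq⟩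
  choose f hf hstep using next
  let p : ℕ → {t // t ∈ r.tree ∧ t ≠ []} := fun k => f^[k] ⟨[m₀], hm₀, by simp⟩
  have hp : ∀ k, p (k + 1) = f (p k) := fun k => Function.iterate_succ_apply' _ _ _
  refine ⟨fun k => r.label (p k).1, fun k => r.cnt (p k).1, hinit, ?_, ?_, ?_⟩
  · exact r.cnt_init [m₀] hm₀ le_rfl
  · intro k
    simp only [hp]
    exact hstep (p k)
  · have := hr (fun k => k.casesOn [] fun j => (p j).1) ⟨rfl, fun i => ?_⟩
    · rwa [setOf_frequently_eq_of_shift (a := 1) (b := 0)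
        (g := fun i => A.prio (r.label (p i).1)) fun i => rfl] at this
    · refine ⟨?_, (p i).2.1⟩
      cases i with
      | zero => exact ⟨m₀, rfl⟩
      | succ j =>
        simp only [hp]
        exact hf (p j)

theorem IsBranch.monotone {A : AAPA σ Q n} {w : Fin n → ℕ → σ} {q : ℕ → Q}
    {c : ℕ → Fin n → ℕ} (h : A.IsBranch w q c) : Monotone c := by
  refine monotone_nat_of_le_succ fun k => ?_
  obtain ⟨d, hd, -⟩ := h.step k
  rw [hd]
  exact le_update_iff.2 ⟨Nat.le_succ _, fun _ _ => le_rfl⟩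

theorem IsBranch.sum_eq {A : AAPA σ Q 2} {w : Fin 2 → ℕ → σ} {q : ℕ → Q}
    {c : ℕ → Fin 2 → ℕ} (h : A.IsBranch w q c) (k : ℕ) : c k 0 + c k 1 = k := by
  induction k with
  | zero => simp [h.zero]
  | succ k ih =>
    obtain ⟨d, hd, -⟩ := h.step k
    rw [hd]
    fin_cases d <;> simp <;> omega

/-- Repeating the loop between times `s` and `t` of a branch gives a branch on any tuple of words
`w'` which agrees with `w` before time `t`, and with a shift of `w` from time `s` on. -/
theorem IsBranch.pump {A : AAPA σ Q n} {w w' : Fin n → ℕ → σ} {q : ℕ → Q}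
    {c : ℕ → Fin n → ℕ} (h : A.IsBranch w q c) {s t : ℕ} (hst : s < t) (hq : q s = q t)
    (hlow : ∀ k < t, ∀ d, w' d (c k d) = w d (c k d))
    (hhigh : ∀ d m, w' d (m + (c t d - c s d)) = w d m) :
    ∃ q' c', q' 0 = q 0 ∧ A.IsBranch w' q' c' := by
  have hle := h.monotone hst.le
  refine ⟨fun k => if k < t then q k else q (k - (t - s)),
    fun k => if k < t then c k else c (k - (t - s)) + (c t - c s),
    by simp [Nat.zero_lt_of_lt hst], ?_, ?_, ?_⟩
  · simp [Nat.zero_lt_of_lt hst, h.zero]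
  · intro k
    rcases lt_or_ge k t with hk | hk
    · obtain ⟨d, hd, hs⟩ := h.step k
      have hc : (if k + 1 < t then c (k + 1) else c (k + 1 - (t - s)) + (c t - c s))
          = c (k + 1) := by
        split_ifs with h1
        · rfl
        · rw [show k + 1 - (t - s) = s by omega, add_tsub_cancel_of_le hle,
            show k + 1 = t by omega]
      have hq' : (if k + 1 < t then q (k + 1) else q (k + 1 - (t - s))) = q (k + 1) := by
        split_ifs with h1
        · rfl
        · rw [show k + 1 - (t - s) = s by omega, hq, show k + 1 = t by omega]
      refine ⟨d, ?_, ?_⟩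
      · rw [hc, if_pos hk, hd]
      · simpa only [hq', if_pos hk, hlow k hk] using hs
    · obtain ⟨d, hd, hs⟩ := h.step (k - (t - s))
      have hk1 : k + 1 - (t - s) = k - (t - s) + 1 := by omega
      refine ⟨d, ?_, ?_⟩
      · simp only [if_neg (show ¬ k < t by omega), if_neg (show ¬ k + 1 < t by omega), hk1, hd]
        ext e
        by_cases he : e = d
        · subst he
          simp
          omega
        · simp [he]
      · simpa only [if_neg (show ¬ k < t by omega), if_neg (show ¬ k + 1 < t by omega), hk1,
          Pi.add_apply, Pi.sub_apply, hhigh] using hs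
  · rw [setOf_frequently_eq_of_shift (a := t) (b := s) (g := fun i => A.prio (q i))]
    · exact h.even
    · intro i
      rw [if_neg (by omega), show i + t - (t - s) = i + s by omega]

end Branches

end AAPA

namespace BlockPeriodic

/-- States of the automaton which checks that both words are equal, and that deleting
the first block `0 ⋯ 0 1` of the second word gives the first one. -/
inductive State
  | skip
  | read
  | expect (b : Bool)

instance : Fintype State :=
  ⟨⟨([.skip, .read, .expect false, .expect true] : List State), by simp⟩, by
    rintro (_ | _ | _ | _) <;> simp⟩

/-- The automaton which checks that both words are equal, and that deleting
the first block `0 ⋯ 0 1` of the second word gives the first one. -/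
def automaton : AAPA Bool State 2 where
  init := .and (.var .skip) (.var .read)
  trans
    | .skip, false, 1 => .var .skip
    | .skip, true, 1 => .var .read
    | .read, b, 0 => .var (.expect b)
    | .expect false, false, 1 => .var .read
    | .expect true, true, 1 => .var .read
    | _, _, _ => .ff
  prio _ := 0

theorem even_prio (q : ℕ → State) :
    Even (sInf {p : ℕ | ∀ N : ℕ, ∃ i : ℕ, N ≤ i ∧ automaton.prio (q i) = p}) := by
  have h0 : 0 ∈ {p : ℕ | ∀ N : ℕ, ∃ i : ℕ, N ≤ i ∧ automaton.prio (q i) = p} :=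
    fun N => ⟨N, le_rfl, rfl⟩
  rw [Nat.sInf_eq_zero.2 (Or.inl h0)]
  exact Even.zero

variable {w : Fin 2 → ℕ → Bool}

theorem exists_child_of_skip (r : automaton.Run w) {t : List ℕ} (ht : t ∈ r.tree) (hne : t ≠ [])
    (hq : r.label t = .skip) : ∃ t' ∈ r.tree, t' ≠ [] ∧
      r.label t' = (if w 1 (r.cnt t 1) then .read else .skip) ∧
      r.cnt t' 0 = r.cnt t 0 ∧ r.cnt t' 1 = r.cnt t 1 + 1 := by
  obtain ⟨d, hc, hs⟩ := r.step t ht hne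
  rw [hq] at hs
  fin_cases d
  · cases hb : w 0 (r.cnt t 0) <;> simp [hb, automaton, PosBool.Sat] at hs
  · cases hb : w 1 (r.cnt t 1) <;> simp [hb, automaton, PosBool.Sat] at hs <;>
    · obtain ⟨m, hm, hl⟩ := hs
      exact ⟨_, hm, by simp, by simp [hl], by simp [hc m hm], by simp [hc m hm]⟩

theorem exists_child_of_read (r : automaton.Run w) {t : List ℕ} (ht : t ∈ r.tree) (hne : t ≠ [])
    (hq : r.label t = .read) : ∃ t' ∈ r.tree, t' ≠ [] ∧
      r.label t' = .expect (w 0 (r.cnt t 0)) ∧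
      r.cnt t' 0 = r.cnt t 0 + 1 ∧ r.cnt t' 1 = r.cnt t 1 := by
  obtain ⟨d, hc, hs⟩ := r.step t ht hne
  rw [hq] at hs
  fin_cases d
  · simp [automaton, PosBool.Sat] at hs
    obtain ⟨m, hm, hl⟩ := hs
    exact ⟨_, hm, by simp, hl, by simp [hc m hm], by simp [hc m hm]⟩
  · simp [automaton, PosBool.Sat] at hs

theorem exists_child_of_expect (r : automaton.Run w) {t : List ℕ} (ht : t ∈ r.tree)
    (hne : t ≠ []) {b : Bool} (hq : r.label t = .expect b) :
    w 1 (r.cnt t 1) = b ∧ ∃ t' ∈ r.tree, t' ≠ [] ∧ r.label t' = .read ∧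
      r.cnt t' 0 = r.cnt t 0 ∧ r.cnt t' 1 = r.cnt t 1 + 1 := by
  obtain ⟨d, hc, hs⟩ := r.step t ht hne
  rw [hq] at hs
  fin_cases d
  · cases b <;> simp [automaton, PosBool.Sat] at hs
  · cases b <;> cases hb : w 1 (r.cnt t 1) <;> simp [hb, automaton, PosBool.Sat] at hs <;>
    · obtain ⟨m, hm, hl⟩ := hs
      exact ⟨rfl, _, hm, by simp, hl, by simp [hc m hm], by simp [hc m hm]⟩

theorem eq_of_read (r : automaton.Run w) {t : List ℕ} (ht : t ∈ r.tree) (hne : t ≠ [])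
    (hq : r.label t = .read) (i : ℕ) :
    w 0 (r.cnt t 0 + i) = w 1 (r.cnt t 1 + i) := by
  induction i generalizing t with
  | zero =>
    obtain ⟨t', ht', hne', hq', h0, h1⟩ := exists_child_of_read r ht hne hq
    obtain ⟨hw, -⟩ := exists_child_of_expect r ht' hne' hq'
    simpa [h1] using hw.symm
  | succ i ih =>
    obtain ⟨t', ht', hne', hq', h0, h1⟩ := exists_child_of_read r ht hne hq
    obtain ⟨-, t'', ht'', hne'', hq'', h0', h1'⟩ := exists_child_of_expect r ht' hne' hq'
    have := ih ht'' hne'' hq''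
    rwa [h0', h1', h0, h1, add_right_comm, add_right_comm _ 1] at this

theorem eq_of_mem_lang (hw : w ∈ automaton.lang) : w 0 = w 1 := by
  obtain ⟨r, -⟩ := hw
  obtain ⟨-, m, hm, hq⟩ := r.init_sat
  have h0 := r.cnt_init [m] hm le_rfl
  ext1 i
  simpa [h0] using eq_of_read r hm (by simp) hq i

theorem shift_eq_of_mem_lang (hw : w ∈ automaton.lang) {k : ℕ} (hk : w 1 k = true)
    (hlt : ∀ j < k, w 1 j = false) (i : ℕ) : w 0 i = w 1 (k + 1 + i) := by
  obtain ⟨r, -⟩ := hw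
  obtain ⟨⟨m, hm, hq⟩, -⟩ := r.init_sat
  have h0 := r.cnt_init [m] hm le_rfl
  have key : ∀ j ≤ k, ∃ t ∈ r.tree, t ≠ [] ∧ r.label t = .skip ∧ r.cnt t 0 = 0 ∧
      r.cnt t 1 = j := by
    intro j
    induction j with
    | zero => exact fun _ => ⟨_, hm, by simp, hq, by simp [h0], by simp [h0]⟩
    | succ j ih =>
      intro hj
      obtain ⟨t, ht, hne, hl, c0, c1⟩ := ih (by omega)
      obtain ⟨t', ht', hne', hl', c0', c1'⟩ := exists_child_of_skip r ht hne hl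
      rw [c1, hlt j hj] at hl'
      exact ⟨t', ht', hne', hl', by omega, by omega⟩
  obtain ⟨t, ht, hne, hl, c0, c1⟩ := key k le_rfl
  obtain ⟨t', ht', hne', hl', c0', c1'⟩ := exists_child_of_skip r ht hne hl
  rw [c1, hk] at hl'
  simpa [c0', c1', c0, c1] using eq_of_read r ht' hne' hl' i

/-- The periodic word with period `0 ⋯ 0 1`, with `n` zeros. -/
def word (n m : ℕ) : Bool := decide ((m + 1) % (n + 1) = 0)

theorem word_of_lt {n m : ℕ} (h : m < n) : word n m = false := by
  simp [word, Nat.mod_eq_of_lt (show m + 1 < n + 1 by omega)]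

theorem word_self (n : ℕ) : word n n = true := by
  simp [word]

theorem word_add (n m : ℕ) : word n (n + 1 + m) = word n m := by
  rw [word, add_assoc, Nat.add_mod_left, word]

theorem isBranch_read (u : ℕ → Bool) : automaton.IsBranch (fun _ => u)
    (fun k => if k % 2 = 0 then .read else .expect (u (k / 2)))
    (fun k => ![(k + 1) / 2, k / 2]) := by
  refine ⟨by ext d; fin_cases d <;> rfl, fun k => ?_, even_prio _⟩
  rcases Nat.mod_two_eq_zero_or_one k with hk | hk
  · refine ⟨0, ?_, ?_⟩
    · ext d
      fin_cases d <;> simp <;> omega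
    · simp [hk, show (k + 1) % 2 = 1 by omega, automaton, PosBool.Sat]
  · refine ⟨1, ?_, ?_⟩
    · ext d
      fin_cases d <;> simp <;> omega
    · cases hb : u (k / 2) <;>
        simp [hk, hb, show (k + 1) % 2 = 0 by omega, automaton, PosBool.Sat]

theorem isBranch_skip (n : ℕ) : automaton.IsBranch (fun _ => word n)
    (fun k => if k ≤ n then .skip else
      if (k - (n + 1)) % 2 = 0 then .read else .expect (word n ((k - (n + 1)) / 2)))
    (fun k => if k ≤ n then ![0, k] else
      ![(k - (n + 1) + 1) / 2, n + 1 + (k - (n + 1)) / 2]) := by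
  refine ⟨by ext d; fin_cases d <;> rfl, fun k => ?_, even_prio _⟩
  rcases lt_trichotomy k n with hk | rfl | hk
  · refine ⟨1, ?_, ?_⟩
    · ext d
      fin_cases d <;> simp [hk.le, Nat.succ_le_of_lt hk]
    · simp [hk.le, Nat.succ_le_of_lt hk, word_of_lt hk, automaton, PosBool.Sat]
  · refine ⟨1, ?_, ?_⟩
    · ext d
      fin_cases d <;> simp
    · simp [word_self, automaton, PosBool.Sat]
  · obtain ⟨j, rfl⟩ := Nat.exists_eq_add_of_le hk
    have h1 : ¬ n + 1 + j ≤ n := by omega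
    have h2 : ¬ n + 1 + j + 1 ≤ n := by omega
    have h3 : n + 1 + j - (n + 1) = j := by omega
    have h4 : n + 1 + j + 1 - (n + 1) = j + 1 := by omega
    obtain ⟨d, hd, hs⟩ := (isBranch_read (word n)).step j
    refine ⟨d, ?_, ?_⟩
    · simp only [Nat.succ_eq_add_one, h1, h2, h3, h4, if_false]
      fin_cases d
      · have e0 := congrFun hd 0
        have e1 := congrFun hd 1
        ext d
        fin_cases d <;> simp at e0 e1 ⊢ <;> omega
      · have e0 := congrFun hd 0
        have e1 := congrFun hd 1
        ext d
        fin_cases d <;> simp at e0 e1 ⊢ <;> omega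
    · simp only [Nat.succ_eq_add_one, h1, h2, h3, h4, if_false]
      fin_cases d
      · exact hs
      · simpa [word_add] using hs

theorem word_mem_lang (n : ℕ) : (fun _ => word n) ∈ automaton.lang :=
  AAPA.mem_lang_of_isBranch (fun b => b.casesOn _ fun _ => _) (fun b => b.casesOn _ fun _ => _)
    ⟨⟨0, rfl⟩, ⟨1, rfl⟩⟩ fun b => by
      cases b with
      | zero => exact isBranch_skip n
      | succ b => exact isBranch_read (word n)

/-- Lengthening the first block of either word leads out of the language. -/
theorem eq_zero_of_pump_mem_lang {n : ℕ} {δ : Fin 2 → ℕ}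
    (h : (fun d m => if m < δ d then false else word n (m - δ d)) ∈ automaton.lang)
    (d : Fin 2) : δ d = 0 := by
  have heq := eq_of_mem_lang h
  have hsh := shift_eq_of_mem_lang h (k := n + δ 1) (by simp [word_self]) (fun j hj => by
    split_ifs with hlt
    · rfl
    · exact word_of_lt (by omega)) n
  rw [if_neg (by omega : ¬ n + δ 1 + 1 + n < δ 1),
    show n + δ 1 + 1 + n - δ 1 = n + 1 + n by omega, word_add, word_self] at hsh
  have hd : (if n < δ d then false else word n (n - δ d)) = true := by
    fin_cases d
    · exact hsh
    · exact (congrFun heq n).symm.trans hsh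
  by_contra hne
  split_ifs at hd with hlt
  rw [word_of_lt (by omega)] at hd
  exact Bool.false_ne_true hd

theorem lang_ne_of_isNondet {Q : Type*} [Fintype Q] {B : AAPA Bool Q 2} (hB : B.IsNondet) :
    B.lang ≠ automaton.lang := by
  intro hL
  set n := Fintype.card Q
  obtain ⟨q, c, hinit, hbr⟩ := hB.exists_isBranch (hL ▸ word_mem_lang n)
  obtain ⟨s, t, hst, htn, hq⟩ : ∃ s t, s < t ∧ t ≤ n ∧ q s = q t := by
    obtain ⟨a, b, hab, h⟩ := Fintype.exists_ne_map_eq_of_card_lt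
      (fun i : Fin (n + 1) => q i) (by simp [n])
    rcases lt_or_gt_of_ne hab with hlt | hlt
    · exact ⟨a, b, hlt, by omega, h⟩
    · exact ⟨b, a, hlt, by omega, h.symm⟩
  obtain ⟨q', c', hq0, hbr'⟩ := hbr.pump hst hq
    (w' := fun d m => if m < c t d - c s d then false else word n (m - (c t d - c s d)))
    (fun k hk d => by
      have hck : c k d < n := by
        have := hbr.sum_eq k
        fin_cases d <;> simp <;> omega
      rw [word_of_lt hck]
      split_ifs
      · rfl
      · exact word_of_lt (by omega))
    (fun d m => by simp)
  have hmem := AAPA.mem_lang_of_isBranch (fun _ => q') (fun _ => c')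
    (by simpa [hq0, eq_comm] using hinit) fun _ => hbr'
  rw [hL] at hmem
  have h0 := eq_zero_of_pump_mem_lang (δ := fun d => c t d - c s d) hmem 0
  have h1 := eq_zero_of_pump_mem_lang (δ := fun d => c t d - c s d) hmem 1
  have hs := hbr.sum_eq s
  have ht := hbr.sum_eq t
  omega

end BlockPeriodic

/-- There exists an AAPA whose language is recognized by no NAPA:
there are a finite alphabet `σ` and an AAPA `A` over `σ` with two directions such
that `L(B) ≠ L(A)` for every NAPA `B` over `σ` with two directions. -/
theorem aapa_strictly_more_expressive_than_napa :
    ∃ (σ : Type) (_ : Fintype σ) (Q : Type) (_ : Fintype Q) (_ : Nonempty Q)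
      (A : AAPA σ Q 2),
      ∀ (Q' : Type) (_ : Fintype Q') (_ : Nonempty Q') (B : AAPA σ Q' 2),
        B.IsNondet → B.lang ≠ A.lang := by
  exact ⟨Bool, inferInstance, BlockPeriodic.State, inferInstance, ⟨.read⟩,
    BlockPeriodic.automaton, fun _ _ _ _ hB => BlockPeriodic.lang_ne_of_isNondet hB⟩
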